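/- Let τ be a first-order language and T a τ-theory. Then every model M of T_∀ embeds into a τ-structure which is T-existentially closed: there exist a T-ec τ-structure N and a τ-embedding of M into N. -/

import Mathlib

open FirstOrder FirstOrder.Language

universe u v

namespace ModelCompanionship

variable {L : FirstOrder.Language.{u, v}}

/-- Iterated existential quantification over the last `k` bound variables. -/
def exsN {α : Type*} : ∀ {n k : ℕ}, L.BoundedFormula α (n + k) → L.BoundedFormula α n
  | _, 0, φ => φ
  | _, _ + 1, φ => exsN φ.ex

/-- A sentence is universal (Π₁) if it is the universal closure of a
quantifier-free formula. -/
def IsUniversalSentence (φ : L.Sentence) : Prop :=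
  ∃ (n : ℕ) (ψ : L.BoundedFormula Empty n), ψ.IsQF ∧ φ = ψ.alls

/-- A sentence is Π₂ if it is of the form `∀ x⃗ ∃ y⃗ φ` with `φ` quantifier-free. -/
def IsPi2Sentence (φ : L.Sentence) : Prop :=
  ∃ (m k : ℕ) (ψ : L.BoundedFormula Empty (m + k)), ψ.IsQF ∧ φ = (exsN ψ).alls

/-- A formula is existential if it is the existential closure of a
quantifier-free formula. -/
def IsExistentialFormula {α : Type*} (φ : L.Formula α) : Prop :=
  ∃ (n : ℕ) (ψ : L.BoundedFormula α n), ψ.IsQF ∧ φ = ψ.exs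

/-- A formula is universal if it is the universal closure of a
quantifier-free formula. -/
def IsUniversalFormula {α : Type*} (φ : L.Formula α) : Prop :=
  ∃ (n : ℕ) (ψ : L.BoundedFormula α n), ψ.IsQF ∧ φ = ψ.alls

/-- A bundled nonempty `L`-structure (with domain in universe `max u v`). -/
structure BStruc (L : FirstOrder.Language.{u, v}) where
  carrier : Type (max u v)
  [str : L.Structure carrier]
  [nonempty' : Nonempty carrier]

instance (N : BStruc L) : L.Structure N.carrier := N.str

instance (N : BStruc L) : Nonempty N.carrier := N.nonempty'

/-- `φ` is a semantic consequence of `T`: it holds in every (nonempty) model of `T`. -/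
def Consequence (T : L.Theory) (φ : L.Sentence) : Prop :=
  ∀ M : BStruc L, M.carrier ⊨ T → M.carrier ⊨ φ

/-- A formula with free variables is a semantic consequence of `T` if its universal
closure holds in every (nonempty) model of `T`. -/
def FormulaConsequence {α : Type*} (T : L.Theory) (φ : L.Formula α) : Prop :=
  ∀ M : BStruc L, M.carrier ⊨ T → ∀ v : α → M.carrier, φ.Realize v

/-- `T_∀`: the set of universal sentences which are consequences of `T`. -/
def univConsequences (T : L.Theory) : L.Theory :=
  {φ | IsUniversalSentence φ ∧ Consequence T φ}

/-- A theory is complete if it is satisfiable and decides every sentence. -/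
def IsCompleteTheory (T : L.Theory) : Prop :=
  T.IsSatisfiable ∧ ∀ φ : L.Sentence, Consequence T φ ∨ Consequence T φ.not

/-- A theory is Π₁-complete if it is satisfiable and decides every universal sentence. -/
def Pi1Complete (T : L.Theory) : Prop :=
  T.IsSatisfiable ∧ ∀ φ : L.Sentence, IsUniversalSentence φ →
    (Consequence T φ ∨ Consequence T φ.not)

/-- An embedding is Σ₁-elementary (`M ≺₁ N`) if it reflects existential formulas
with parameters in the domain. -/
def Sigma1Elementary {M : Type*} {N : Type*} [L.Structure M] [L.Structure N]
    (j : M ↪[L] N) : Prop :=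
  ∀ (n : ℕ) (φ : L.Formula (Fin n)), IsExistentialFormula φ →
    ∀ a : Fin n → M, φ.Realize (fun i => j (a i)) → φ.Realize a

/-- An embedding is elementary if it preserves and reflects all first-order formulas. -/
def ElementaryEmb {M : Type*} {N : Type*} [L.Structure M] [L.Structure N]
    (j : M ↪[L] N) : Prop :=
  ∀ (n : ℕ) (φ : L.Formula (Fin n)) (a : Fin n → M),
    φ.Realize (fun i => j (a i)) ↔ φ.Realize a

/-- `M` is `T`-existentially closed: it embeds into a model of `T` and every
embedding of `M` into a model of `T` is Σ₁-elementary. -/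
def IsEC (T : L.Theory) (M : Type*) [L.Structure M] : Prop :=
  (∃ N : BStruc L, N.carrier ⊨ T ∧ Nonempty (M ↪[L] N.carrier)) ∧
  ∀ N : BStruc L, N.carrier ⊨ T → ∀ j : M ↪[L] N.carrier, Sigma1Elementary j

/-- A theory is model complete if every embedding between its models is elementary. -/
def ModelComplete (T : L.Theory) : Prop :=
  ∀ M N : BStruc L, M.carrier ⊨ T → N.carrier ⊨ T →
    ∀ j : M.carrier ↪[L] N.carrier, ElementaryEmb j

/-- `Tstar` is the model companion of `T`. -/
def IsModelCompanion (T Tstar : L.Theory) : Prop :=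
  (∀ M : BStruc L, M.carrier ⊨ T →
    ∃ N : BStruc L, N.carrier ⊨ Tstar ∧ Nonempty (M.carrier ↪[L] N.carrier)) ∧
  (∀ M : BStruc L, M.carrier ⊨ Tstar →
    ∃ N : BStruc L, N.carrier ⊨ T ∧ Nonempty (M.carrier ↪[L] N.carrier)) ∧
  ModelComplete Tstar

/-! A model `M` of `T_∀` has an extension `N ⊨ T` in which every existential formula over `M` that
holds in some extension of `N` modelling `T` already holds: let `N` realize a maximal set of
existential formulas over `M` that contains the quantifier-free diagram of `M` and is realizable in
a model of `T`. Existential formulas persist to extensions, so one that becomes true later could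
have been added to the set. Iterating this `ω` times gives a chain whose union `U` is again a model
of `T_∀`, hence embeds into a model of `T`. The finitely many parameters of an existential formula
over `U` lie in one stage of the chain, and the next stage decides the formula. -/

section Formulas

variable {α β : Type*} {n : ℕ}

theorem isQF_restrictFreeVar [DecidableEq α] {φ : L.BoundedFormula α n} (hφ : φ.IsQF)
    (f : φ.freeVarFinset → β) : (φ.restrictFreeVar f).IsQF := by
  induction hφ with
  | falsum => exact .falsum
  | of_isAtomic hatomic =>
    cases hatomic with
    | equal t₁ t₂ => exact (BoundedFormula.IsAtomic.equal _ _).isQF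
    | rel R ts => exact (BoundedFormula.IsAtomic.rel _ _).isQF
  | imp _ _ ih₁ ih₂ => exact (ih₁ _).imp (ih₂ _)

theorem isQF_foldr_inf {l : List (L.BoundedFormula α n)} (hl : ∀ φ ∈ l, φ.IsQF) :
    (l.foldr (· ⊓ ·) ⊤).IsQF := by
  induction l with
  | nil => exact .top
  | cons φ l ih =>
    rw [List.forall_mem_cons] at hl
    exact hl.1.inf (ih hl.2)

theorem isQF_iInf [Finite β] {f : β → L.BoundedFormula α n} (hf : ∀ b, (f b).IsQF) :
    (BoundedFormula.iInf f).IsQF :=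
  isQF_foldr_inf (by simpa using hf)

theorem isExistential_relabel {m : ℕ} {φ : L.BoundedFormula α m} (hφ : φ.IsExistential)
    (g : α → β ⊕ Fin n) : (φ.relabel g).IsExistential := by
  induction hφ with
  | of_isQF hqf => exact (hqf.relabel g).isExistential
  | ex _ ih =>
    rw [BoundedFormula.relabel_ex]
    exact ih.ex

theorem isExistential_exs {φ : L.BoundedFormula α n} (hφ : φ.IsExistential) :
    BoundedFormula.IsExistential φ.exs := by
  induction n with
  | zero => exact hφ
  | succ n ih => exact ih hφ.ex

theorem IsExistentialFormula.isExistential {φ : L.Formula α} (hφ : IsExistentialFormula φ) :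
    φ.IsExistential := by
  obtain ⟨n, ψ, hψ, rfl⟩ := hφ
  exact isExistential_exs hψ.isExistential

theorem realize_comp_embedding_of_isExistential {M N : Type*} [L.Structure M] [L.Structure N]
    {φ : L.Formula α} (hφ : φ.IsExistential) (k : M ↪[L] N) {w : α → M} (hw : φ.Realize w) :
    φ.Realize (k ∘ w) := by
  have := hφ.realize_embedding k hw
  rwa [Subsingleton.elim (k ∘ default) default] at this

open Classical in
/-- The universal closure of a formula. The variable type may be infinite, so only the finitely many
variables that occur in the formula are quantified. -/
noncomputable def univClosure (φ : L.Formula α) : L.Sentence :=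
  Formula.iAlls φ.freeVarFinset
    (φ.restrictFreeVar (Sum.inr : φ.freeVarFinset → Empty ⊕ φ.freeVarFinset))

theorem isUniversalSentence_univClosure {φ : L.Formula α} (hφ : φ.IsQF) :
    IsUniversalSentence (univClosure φ) := by
  classical
  exact ⟨_, _, (isQF_restrictFreeVar hφ _).relabel _, rfl⟩

theorem realize_univClosure {M : Type*} [L.Structure M] [Nonempty M] {φ : L.Formula α} :
    M ⊨ univClosure φ ↔ ∀ v : α → M, φ.Realize v := by
  classical
  refine Formula.realize_iAlls.trans ⟨fun h v => ?_, fun h xs => ?_⟩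
  · exact (BoundedFormula.realize_restrictFreeVar (f := Sum.inr) v fun _ => rfl).1 (h fun a => v a)
  · obtain ⟨v, rfl⟩ : ∃ v : α → M, (fun a : φ.freeVarFinset => v a) = xs :=
      Subtype.val_injective.surjective_comp_right xs
    exact (BoundedFormula.realize_restrictFreeVar (f := Sum.inr) v fun _ => rfl).2 (h v)

end Formulas

section Realizable

variable {T : L.Theory} {α : Type (max u v)} {S : Set (L.Formula α)}

/-- A set of formulas is realizable over `T` if a single assignment into some model of `T` satisfies
all of its members, that is, if it is a partial type of `T`. -/
def IsRealizable (T : L.Theory) (S : Set (L.Formula α)) : Prop :=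
  ∃ N : BStruc L, N.carrier ⊨ T ∧ ∃ w : α → N.carrier, ∀ φ ∈ S, φ.Realize w

theorem IsRealizable.mono {S' : Set (L.Formula α)} (hS' : IsRealizable T S') (h : S ⊆ S') :
    IsRealizable T S := by
  obtain ⟨N, hN, w, hw⟩ := hS'
  exact ⟨N, hN, w, fun φ hφ => hw φ (h hφ)⟩

theorem isRealizable_iff_isSatisfiable :
    IsRealizable T S ↔
      ((L.lhomWithConstants α).onTheory T ∪ Formula.equivSentence '' S).IsSatisfiable := by
  constructor
  · rintro ⟨N, hN, w, hw⟩
    let := constantsOn.structure w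
    have hT : N.carrier ⊨ (L.lhomWithConstants α).onTheory T := (LHom.onTheory_model _ T).2 hN
    have hS : N.carrier ⊨ Formula.equivSentence '' S := by
      rw [Theory.model_iff]
      rintro _ ⟨φ, hφ, rfl⟩
      exact (Formula.realize_equivSentence N.carrier φ).2 (hw φ hφ)
    have := hT.union hS
    exact Theory.Model.isSatisfiable N.carrier
  · rintro ⟨N⟩
    let : L.Structure N := (L.lhomWithConstants α).reduct N
    have : (L.lhomWithConstants α).IsExpansionOn N := LHom.isExpansionOn_reduct _ _
    obtain ⟨hT, hS⟩ := Theory.model_union_iff.1 N.is_model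
    exact ⟨⟨N⟩, (LHom.onTheory_model _ T).1 hT, fun a => (L.con a : N), fun φ hφ =>
      (Formula.realize_equivSentence N φ).1 (hS.realize_of_mem _ ⟨φ, hφ, rfl⟩)⟩

theorem isRealizable_iff_forall_finite :
    IsRealizable T S ↔ ∀ S₀ ⊆ S, S₀.Finite → IsRealizable T S₀ := by
  refine ⟨fun hS S₀ hS₀ _ => hS.mono hS₀, fun h => ?_⟩
  rw [isRealizable_iff_isSatisfiable, Theory.isSatisfiable_iff_isFinitelySatisfiable]
  intro T₀ hT₀
  let S₀ : Set (L.Formula α) := S ∩ Formula.equivSentence ⁻¹' T₀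
  have hfin : S₀.Finite :=
    (T₀.finite_toSet.preimage Formula.equivSentence.injective.injOn).subset Set.inter_subset_right
  refine (isRealizable_iff_isSatisfiable.1 (h S₀ Set.inter_subset_left hfin)).mono fun σ hσ => ?_
  rcases hT₀ hσ with hT | ⟨φ, hφ, rfl⟩
  · exact .inl hT
  · exact .inr ⟨φ, ⟨hφ, hσ⟩, rfl⟩

theorem exists_maximal_isRealizable {Γ : Set (L.Formula α)} (hΓ : S ⊆ Γ) (hS : IsRealizable T S) :
    ∃ S', S ⊆ S' ∧ Maximal (fun S' => S' ⊆ Γ ∧ IsRealizable T S') S' := by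
  have hchar : Order.IsOfFiniteCharacter {S' | S' ⊆ Γ ∧ IsRealizable T S'} := by
    refine fun S' => ⟨fun hS' S₀ hS₀ _ => ⟨hS₀.trans hS'.1, hS'.2.mono hS₀⟩, fun h => ⟨?_, ?_⟩⟩
    · exact fun φ hφ => (h {φ} (by simpa using hφ) (Set.finite_singleton φ)).1 rfl
    · exact isRealizable_iff_forall_finite.2 fun S₀ hS₀ hfin => (h S₀ hS₀ hfin).2
  exact hchar.exists_maximal ⟨hΓ, hS⟩

end Realizable

section Diagram

/-- The quantifier-free diagram of `M`: the quantifier-free formulas with parameters in `M` that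
hold in `M`. Parameters are encoded as free variables, each assigned to itself. -/
def qfDiagram (L : FirstOrder.Language.{u, v}) (M : Type*) [L.Structure M] : Set (L.Formula M) :=
  {φ | φ.IsQF ∧ φ.Realize id}

theorem realize_iff_of_realize_qfDiagram {M N : Type*} [L.Structure M] [L.Structure N] {w : M → N}
    (hw : ∀ φ ∈ qfDiagram L M, φ.Realize w) {φ : L.Formula M} (hφ : φ.IsQF) :
    φ.Realize w ↔ φ.Realize id := by
  refine ⟨fun hφw => ?_, fun hφid => hw φ ⟨hφ, hφid⟩⟩
  by_contra hφid
  exact Formula.realize_not.1 (hw φ.not ⟨hφ.not, Formula.realize_not.2 hφid⟩) hφw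

/-- The embedding of `M` given by an assignment satisfying the quantifier-free diagram of `M`. -/
def embeddingOfQFDiagram {M N : Type*} [L.Structure M] [L.Structure N] (w : M → N)
    (hw : ∀ φ ∈ qfDiagram L M, φ.Realize w) : M ↪[L] N where
  toFun := w
  inj' a b hab := by
    have := realize_iff_of_realize_qfDiagram hw (φ := Term.equal (.var a) (.var b))
      (BoundedFormula.IsAtomic.equal _ _).isQF
    exact Formula.realize_equal.1 (this.1 (Formula.realize_equal.2 hab))
  map_fun' f x := by
    have := realize_iff_of_realize_qfDiagram hw
      (φ := Term.equal (.func f fun i => .var (x i)) (.var (Structure.funMap f x)))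
      (BoundedFormula.IsAtomic.equal _ _).isQF
    exact (Formula.realize_equal.1 (this.2 (Formula.realize_equal.2 rfl))).symm
  map_rel' R x := by
    have := realize_iff_of_realize_qfDiagram hw (φ := R.formula fun i => .var (x i))
      (BoundedFormula.IsAtomic.rel _ _).isQF
    exact Formula.realize_rel.symm.trans (this.trans Formula.realize_rel)

variable {T : L.Theory}

theorem models_univConsequences {N : BStruc L} (hN : N.carrier ⊨ T) :
    N.carrier ⊨ univConsequences T :=
  ⟨fun _ hφ => hφ.2 N hN⟩

theorem exists_model_realize_of_isQF {α M : Type*} [L.Structure M] [Nonempty M]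
    (hM : M ⊨ univConsequences T) {φ : L.Formula α} (hφ : φ.IsQF) {v : α → M} (hv : φ.Realize v) :
    ∃ N : BStruc L, N.carrier ⊨ T ∧ ∃ w : α → N.carrier, φ.Realize w := by
  by_contra! h
  have hmem : univClosure φ.not ∈ univConsequences T :=
    ⟨isUniversalSentence_univClosure hφ.not, fun N hN =>
      realize_univClosure.2 fun w => Formula.realize_not.2 (h N hN w)⟩
  exact Formula.realize_not.1 (realize_univClosure.1 (hM.realize_of_mem _ hmem) v) hv

variable {M : Type (max u v)} [L.Structure M] [Nonempty M]

theorem isRealizable_qfDiagram (hM : M ⊨ univConsequences T) :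
    IsRealizable T (qfDiagram L M) := by
  rw [isRealizable_iff_forall_finite]
  intro S₀ hS₀ hfin
  have := hfin.to_subtype
  obtain ⟨N, hN, w, hw⟩ := exists_model_realize_of_isQF hM (v := id)
    (isQF_iInf fun φ : S₀ => (hS₀ φ.2).1) (Formula.realize_iInf.2 fun φ => (hS₀ φ.2).2)
  exact ⟨N, hN, w, fun φ hφ => Formula.realize_iInf.1 hw ⟨φ, hφ⟩⟩

theorem exists_model_embedding (hM : M ⊨ univConsequences T) :
    ∃ N : BStruc L, N.carrier ⊨ T ∧ Nonempty (M ↪[L] N.carrier) := by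
  obtain ⟨N, hN, w, hw⟩ := isRealizable_qfDiagram hM
  exact ⟨N, hN, ⟨embeddingOfQFDiagram w hw⟩⟩

end Diagram

section ExistentiallyClosedOver

variable {T : L.Theory}

/-- The extension `j : M ↪[L] N` is `T`-existentially closed over `M`: every existential formula
with parameters in `M` that holds in an extension of `N` modelling `T` already holds in `N`. This is
the one-step approximation to `IsEC`; parameters are encoded as free variables indexed by `M`. -/
def IsECOver (T : L.Theory) {M N : Type*} [L.Structure M] [L.Structure N] (j : M ↪[L] N) : Prop :=
  ∀ C : BStruc L, C.carrier ⊨ T → ∀ k : N ↪[L] C.carrier, ∀ φ : L.Formula M,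
    φ.IsExistential → φ.Realize (k ∘ j) → φ.Realize j

theorem isECOver_of_maximal {M : Type (max u v)} [L.Structure M] {S : Set (L.Formula M)}
    (hS : Maximal (fun S => S ⊆ {φ | φ.IsExistential} ∧ IsRealizable T S) S)
    {N : Type*} [L.Structure N] (j : M ↪[L] N) (hj : ∀ φ ∈ S, φ.Realize j) : IsECOver T j := by
  intro C hC k φ hφ hk
  have hexist : insert φ S ⊆ {φ | φ.IsExistential} := Set.insert_subset hφ hS.prop.1
  have hreal : IsRealizable T (insert φ S) := by
    refine ⟨C, hC, k ∘ j, Set.forall_mem_insert.2 ⟨hk, fun ψ hψ => ?_⟩⟩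
    exact realize_comp_embedding_of_isExistential (hS.prop.1 hψ) k (hj ψ hψ)
  exact hj φ (hS.le_of_ge ⟨hexist, hreal⟩ (Set.subset_insert φ S) (Set.mem_insert φ S))

theorem exists_model_isECOver {M : Type (max u v)} [L.Structure M] [Nonempty M]
    (hM : M ⊨ univConsequences T) :
    ∃ N : BStruc L, N.carrier ⊨ T ∧ ∃ j : M ↪[L] N.carrier, IsECOver T j := by
  obtain ⟨S, hdiag, hS⟩ := exists_maximal_isRealizable (Γ := {φ | φ.IsExistential})
    (fun φ hφ => hφ.1.isExistential) (isRealizable_qfDiagram hM)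
  obtain ⟨N, hN, w, hw⟩ := hS.prop.2
  exact ⟨N, hN, embeddingOfQFDiagram w fun φ hφ => hw φ (hdiag hφ), isECOver_of_maximal hS _ hw⟩

theorem exists_chain_isECOver (B : BStruc L) (hB : B.carrier ⊨ univConsequences T) :
    ∃ (G : ℕ → BStruc L) (f : ∀ n, (G n).carrier ↪[L] (G (n + 1)).carrier),
      Nonempty (B.carrier ↪[L] (G 0).carrier) ∧
      (∀ n, (G n).carrier ⊨ univConsequences T) ∧ ∀ n, IsECOver T (f n) := by
  choose next hnext j hj using fun B : {B : BStruc L // B.carrier ⊨ univConsequences T} =>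
    exists_model_isECOver B.2
  let G : ℕ → {B : BStruc L // B.carrier ⊨ univConsequences T} := fun n =>
    n.rec ⟨B, hB⟩ fun _ B => ⟨next B, models_univConsequences (hnext B)⟩
  exact ⟨fun n => (G n).1, fun n => j (G n), ⟨.refl L _⟩, fun n => (G n).2, fun n => hj (G n)⟩

end ExistentiallyClosedOver

section DirectLimit

theorem natLERec_succ {G : ℕ → Type*} [∀ n, L.Structure (G n)] (f : ∀ n, G n ↪[L] G (n + 1))
    (n : ℕ) : DirectedSystem.natLERec f n (n + 1) n.le_succ = f n := by
  ext x
  rw [DirectedSystem.coe_natLERec]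
  exact Nat.leRecOn_succ' (C := G) (next := fun {k} => f k) x

variable {T : L.Theory} {ι : Type*} [Preorder ι] [IsDirectedOrder ι] [Nonempty ι]
  {G : ι → Type*} [∀ i, L.Structure (G i)] {F : ∀ i j, i ≤ j → G i ↪[L] G j}
  [DirectedSystem G fun i j h => F i j h]

theorem exists_eq_directLimit_of_comp {α : Type*} [Finite α] (x : α → Language.DirectLimit G F) :
    ∃ i, ∃ y : α → G i, x = Language.DirectLimit.of L ι G F i ∘ y :=
  Language.DirectLimit.exists_quotient_mk'_sigma_mk'_eq G F x

theorem directLimit_models_univConsequences (hG : ∀ i, G i ⊨ univConsequences T) :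
    Language.DirectLimit G F ⊨ univConsequences T := by
  refine ⟨fun φ hφ => ?_⟩
  obtain ⟨⟨n, ψ, hψ, rfl⟩, -⟩ := id hφ
  refine BoundedFormula.realize_alls.2 fun xs => ?_
  obtain ⟨i, ys, rfl⟩ := exists_eq_directLimit_of_comp xs
  have hys : ψ.Realize default ys :=
    BoundedFormula.realize_alls.1 ((hG i).realize_of_mem _ hφ) ys
  have := (hψ.realize_embedding (Language.DirectLimit.of L ι G F i)).2 hys
  rwa [Subsingleton.elim (Language.DirectLimit.of L ι G F i ∘ default) default] at this

theorem sigma1Elementary_of_directLimit (hF : ∀ i, ∃ j, ∃ hij : i ≤ j, IsECOver T (F i j hij))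
    {C : BStruc L} (hC : C.carrier ⊨ T) (k : Language.DirectLimit G F ↪[L] C.carrier) :
    Sigma1Elementary k := by
  intro n φ hφ a hka
  obtain ⟨i, y, rfl⟩ := exists_eq_directLimit_of_comp a
  obtain ⟨j, hij, hec⟩ := hF i
  let ofj := Language.DirectLimit.of L ι G F j
  have hof : Language.DirectLimit.of L ι G F i ∘ y = ofj ∘ F i j hij ∘ y :=
    funext fun _ => Language.DirectLimit.of_f.symm
  have hstage : φ.Realize (F i j hij ∘ y) := by
    refine Formula.realize_relabel.1 (hec C hC (k.comp ofj) (φ.relabel y)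
      (isExistential_relabel hφ.isExistential _) (Formula.realize_relabel.2 ?_))
    change φ.Realize (k ∘ ofj ∘ F i j hij ∘ y)
    rwa [← hof]
  rw [hof]
  exact realize_comp_embedding_of_isExistential hφ.isExistential ofj hstage

end DirectLimit

/-- Every model of `T_∀` embeds into a `T`-existentially closed structure. -/
theorem exists_ec_extension (T : L.Theory)
    (M : Type (max u v)) [L.Structure M] [Nonempty M] (hM : M ⊨ univConsequences T) :
    ∃ N : BStruc L, IsEC T N.carrier ∧ Nonempty (M ↪[L] N.carrier) := by
  obtain ⟨G, f, ⟨g⟩, hG, hf⟩ := exists_chain_isECOver ⟨M⟩ hM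
  let F := DirectedSystem.natLERec f
  let N := Language.DirectLimit (fun n => (G n).carrier) F
  let toLimit : M ↪[L] N := (Language.DirectLimit.of L ℕ _ F 0).comp g
  have : Nonempty N := ‹Nonempty M›.map toLimit
  have hN : N ⊨ univConsequences T := directLimit_models_univConsequences hG
  have hF : ∀ i, ∃ j, ∃ hij : i ≤ j, IsECOver T (F i j hij) := fun i =>
    ⟨i + 1, i.le_succ, by simpa only [F, natLERec_succ] using hf i⟩
  exact ⟨⟨N⟩, ⟨exists_model_embedding hN, fun C hC => sigma1Elementary_of_directLimit hF hC⟩,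
    ⟨toLimit⟩⟩

end ModelCompanionship
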